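/- Let G be a finite group, let A be a commutative subgroup of G, and let t ∈ G be an element with t ∉ A, t² = 1, and t·a·t⁻¹ = a⁻¹ for all a ∈ A, such that G is generated by A together with t (so G is the generalized dihedral group A ⋊ C₂ with C₂ acting by inversion). Then the power graph of G is chordal if and only if the power graph of A is chordal. -/

import Mathlib

/-- The power graph of a group: distinct `x` and `y` are adjacent iff one is a power
of the other. -/
def powerGraph (G : Type*) [Group G] : SimpleGraph G :=
  SimpleGraph.fromRel (fun x y => x ∈ Subgroup.zpowers y)

/-- A graph is chordal if it has no induced cycle on at least 4 vertices. -/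
def IsChordal {V : Type*} (Γ : SimpleGraph V) : Prop :=
  ∀ n : ℕ, 4 ≤ n → IsEmpty (SimpleGraph.cycleGraph n ↪g Γ)

/-!
If `t` inverts `A` and `t ^ 2 = 1`, then every element of `G` outside `A` has the form `t * a` with
`a ∈ A`, and `(t * a) ^ 2 = (t * a * t⁻¹) * t ^ 2 * a = 1`. In the power graph such an involution is
adjacent to `1` only. A vertex on an induced cycle of length at least `4` has two non-adjacent
neighbours, so every such cycle of the power graph of `G` lies in `A`.
-/

section Graph

variable {V W : Type*} {Γ : SimpleGraph V} {Δ : SimpleGraph W}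

theorem not_isClique_neighborSet_cycleGraph {n : ℕ} (hn : 4 ≤ n) (i : Fin n) :
    ¬ (SimpleGraph.cycleGraph n).IsClique ((SimpleGraph.cycleGraph n).neighborSet i) := by
  obtain ⟨m, rfl⟩ := Nat.exists_eq_add_of_le' hn
  have two_ne_zero : (1 + 1 : Fin (m + 4)) ≠ 0 := by
    simp [Fin.ext_iff, Fin.val_add, Nat.mod_eq_of_lt (show 2 < m + 4 by lia)]
  have two_ne_one : (1 + 1 : Fin (m + 4)) ≠ 1 := by simp
  have three_ne_zero : (1 + 1 + 1 : Fin (m + 4)) ≠ 0 := by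
    simp [Fin.ext_iff, Fin.val_add, Nat.mod_eq_of_lt (show 3 < m + 4 by lia)]
  have sub_eq : i + 1 - (i - 1) = 1 + 1 := by abel
  intro clique
  have adj : (SimpleGraph.cycleGraph (m + 4)).Adj (i + 1) (i - 1) := by
    refine clique ?_ ?_ fun h ↦ two_ne_zero (sub_eq.symm.trans (sub_eq_zero.mpr h)) <;>
      simp [SimpleGraph.cycleGraph_neighborSet]
  rw [SimpleGraph.cycleGraph_adj, ← neg_sub (i + 1) (i - 1), sub_eq, neg_eq_iff_add_eq_zero] at adj
  exact adj.elim two_ne_one three_ne_zero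

theorem isClique_neighborSet_of_embedding (f : Δ ↪g Γ) {w : W}
    (clique : Γ.IsClique (Γ.neighborSet (f w))) : Δ.IsClique (Δ.neighborSet w) :=
  fun _ hu _ hv huv ↦ f.map_adj_iff.mp <|
    clique (f.map_adj_iff.mpr hu) (f.map_adj_iff.mpr hv) (f.injective.ne huv)

theorem IsChordal.of_embedding (hΓ : IsChordal Γ) (f : Δ ↪g Γ) : IsChordal Δ :=
  fun n hn ↦ ⟨fun cycle ↦ (hΓ n hn).false (f.comp cycle)⟩

theorem exists_comp_eq_of_range_subset {U : Type*} {Λ : SimpleGraph U} (f : Δ ↪g Γ) (g : Λ ↪g Γ)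
    (hgf : Set.range g ⊆ Set.range f) : ∃ h : Λ ↪g Δ, f.comp h = g := by
  choose h hh using fun u ↦ hgf (Set.mem_range_self u)
  refine ⟨⟨⟨h, fun u v huv ↦ g.injective ?_⟩, ?_⟩, RelEmbedding.ext hh⟩
  · rw [← hh u, ← hh v, huv]
  · intro u v
    rw [← g.map_adj_iff, ← hh u, ← hh v, f.map_adj_iff]
    rfl

theorem isChordal_iff_of_isClique_neighborSet (f : Δ ↪g Γ)
    (clique : ∀ v ∉ Set.range f, Γ.IsClique (Γ.neighborSet v)) : IsChordal Γ ↔ IsChordal Δ := by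
  refine ⟨fun hΓ ↦ hΓ.of_embedding f, fun hΔ n hn ↦ ⟨fun cycle ↦ ?_⟩⟩
  have cycle_subset : Set.range cycle ⊆ Set.range f := by
    rintro _ ⟨i, rfl⟩
    by_contra hi
    exact not_isClique_neighborSet_cycleGraph hn i
      (isClique_neighborSet_of_embedding cycle (clique _ hi))
  obtain ⟨cycle', -⟩ := exists_comp_eq_of_range_subset f cycle cycle_subset
  exact (hΔ n hn).false cycle'

end Graph

section Group

variable {G H : Type*} [Group G] [Group H]

theorem powerGraph_adj {x y : G} : (powerGraph G).Adj x y ↔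
    x ≠ y ∧ (x ∈ Subgroup.zpowers y ∨ y ∈ Subgroup.zpowers x) :=
  SimpleGraph.fromRel_adj _ x y

/-- The embedding of power graphs induced by an injective group homomorphism. -/
def powerGraphEmbedding (f : H →* G) (hf : Function.Injective f) :
    powerGraph H ↪g powerGraph G where
  toFun := f
  inj' := hf
  map_rel_iff' {x y} := by
    simp only [Function.Embedding.coeFn_mk, powerGraph_adj, hf.ne_iff, Subgroup.mem_zpowers_iff,
      ← map_zpow, hf.eq_iff]

theorem eq_one_or_eq_of_mem_zpowers {x y : G} (hx : x ^ 2 = 1) (hy : y ∈ Subgroup.zpowers x) :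
    y = 1 ∨ y = x := by
  obtain ⟨k, rfl⟩ := Subgroup.mem_zpowers_iff.mp hy
  have sq_zpow (m : ℤ) : x ^ (2 * m) = 1 := by
    rw [zpow_mul, zpow_ofNat, hx, one_zpow]
  obtain ⟨m, rfl | rfl⟩ := Int.even_or_odd' k
  · exact .inl (sq_zpow m)
  · exact .inr (by rw [zpow_add_one, sq_zpow, one_mul])

variable {A : Subgroup G} {t : G}

theorem eq_one_of_powerGraph_adj {x y : G} (hA : ∀ z ∉ A, z ^ 2 = 1) (hx : x ∉ A)
    (adj : (powerGraph G).Adj x y) : y = 1 := by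
  obtain ⟨hne, hxy | hyx⟩ := powerGraph_adj.mp adj
  · have hy : y ∉ A := fun hy ↦ hx (Subgroup.zpowers_le.mpr hy hxy)
    rcases eq_one_or_eq_of_mem_zpowers (hA y hy) hxy with rfl | h
    · exact absurd A.one_mem hx
    · exact absurd h hne
  · exact (eq_one_or_eq_of_mem_zpowers (hA x hx) hyx).resolve_right hne.symm

theorem isChordal_powerGraph_iff_of_sq_eq_one (hA : ∀ x ∉ A, x ^ 2 = 1) :
    IsChordal (powerGraph G) ↔ IsChordal (powerGraph A) := by
  refine isChordal_iff_of_isClique_neighborSet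
    (powerGraphEmbedding A.subtype A.subtype_injective) fun x hx ↦ ?_
  have hxA : x ∉ A := fun h ↦ hx ⟨⟨x, h⟩, rfl⟩
  exact .of_subsingleton fun y hy z hz ↦
    (eq_one_of_powerGraph_adj hA hxA hy).trans (eq_one_of_powerGraph_adj hA hxA hz).symm

theorem exists_zpow_mul_eq_of_closure_eq_top (ht : t ∈ Subgroup.normalizer (A : Set G))
    (hgen : Subgroup.closure (A ∪ {t} : Set G) = ⊤) (x : G) :
    ∃ k : ℤ, ∃ a ∈ A, t ^ k * a = x := by
  have sup_eq_top : Subgroup.zpowers t ⊔ A = ⊤ := by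
    rw [← hgen, Subgroup.closure_union, Subgroup.closure_eq, ← Subgroup.zpowers_eq_closure,
      sup_comm]
  have hx : x ∈ ((Subgroup.zpowers t ⊔ A : Subgroup G) : Set G) := by
    rw [sup_eq_top]
    trivial
  rw [Subgroup.coe_mul_of_left_le_normalizer_right _ _ (Subgroup.zpowers_le.mpr ht)] at hx
  obtain ⟨_, ⟨k, rfl⟩, a, ha, hka⟩ := hx
  exact ⟨k, a, ha, hka⟩

theorem mem_normalizer_of_conj_eq_inv (hinv : ∀ a ∈ A, t * a * t⁻¹ = a⁻¹) :
    t ∈ Subgroup.normalizer (A : Set G) := by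
  refine Subgroup.mem_set_normalizer_iff.mpr fun a ↦ ⟨fun ha ↦ ?_, fun ha ↦ ?_⟩
  · rw [hinv a ha]
    exact A.inv_mem ha
  · have conj_eq_inv : t * a * t⁻¹ = a⁻¹ :=
      mul_left_cancel (mul_right_cancel ((hinv _ ha).trans conj_inv))
    rw [conj_eq_inv] at ha
    exact A.inv_mem_iff.mp ha

theorem mul_sq_eq_one_of_conj_eq_inv {a : G} (ht2 : t ^ 2 = 1) (hinv : t * a * t⁻¹ = a⁻¹) :
    (t * a) ^ 2 = 1 :=
  calc (t * a) ^ 2 = (t * a * t⁻¹) * t ^ 2 * a := by simp only [pow_two]; group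
    _ = 1 := by rw [hinv, ht2, mul_one, inv_mul_cancel]

theorem sq_eq_one_of_notMem (ht2 : t ^ 2 = 1) (hinv : ∀ a ∈ A, t * a * t⁻¹ = a⁻¹)
    (hgen : Subgroup.closure (A ∪ {t} : Set G) = ⊤) {x : G} (hx : x ∉ A) : x ^ 2 = 1 := by
  obtain ⟨k, a, ha, rfl⟩ :=
    exists_zpow_mul_eq_of_closure_eq_top (mem_normalizer_of_conj_eq_inv hinv) hgen x
  rcases eq_one_or_eq_of_mem_zpowers ht2 (Subgroup.zpow_mem_zpowers t k) with hk | hk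
  · rw [hk, one_mul] at hx
    exact absurd ha hx
  · rw [hk]
    exact mul_sq_eq_one_of_conj_eq_inv ht2 (hinv a ha)

end Group

theorem stmt13_general {G : Type*} [Group G] {A : Subgroup G} {t : G} (ht2 : t ^ 2 = 1)
    (hinv : ∀ a ∈ A, t * a * t⁻¹ = a⁻¹)
    (hgen : Subgroup.closure (A ∪ {t} : Set G) = ⊤) :
    IsChordal (powerGraph G) ↔ IsChordal (powerGraph A) :=
  isChordal_powerGraph_iff_of_sq_eq_one fun _ hx ↦ sq_eq_one_of_notMem ht2 hinv hgen hx

theorem stmt13 (G : Type*) [Group G] [Fintype G] (A : Subgroup G) (t : G)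
    (hA : ∀ a ∈ A, ∀ b ∈ A, a * b = b * a)
    (ht : t ∉ A) (ht2 : t ^ 2 = 1)
    (hinv : ∀ a ∈ A, t * a * t⁻¹ = a⁻¹)
    (hgen : Subgroup.closure (A ∪ {t} : Set G) = ⊤) :
    IsChordal (powerGraph G) ↔ IsChordal (powerGraph A) :=
  stmt13_general ht2 hinv hgen
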